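/- arXiv:1407.5256 — 2 statements merged into one kernel-verified Lean document; each statement's English description precedes it below -/
import Mathlib

section
/- The image of φ_k : C[Σ_k] → End_C(V^{⊗k}) is exactly the centralizer algebra End_{gl_n}(V^{⊗k}); that is, φ_k defines a surjective C-algebra homomorphism C[Σ_k] → End_{gl_n}(V^{⊗k}). -/
open scoped TensorProduct

/-- `V^{⊗k}` for `V = ℂ^n`. -/
abbrev SWTensor (n K : ℕ) : Type := ⨂[ℂ] (_ : Fin K), (Fin n → ℂ)

/-- The operator `D_A = Σ_j id ⊗ ⋯ ⊗ A ⊗ ⋯ ⊗ id` on `V^{⊗k}`. -/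
noncomputable def SWD (n K : ℕ) (A : Matrix (Fin n) (Fin n) ℂ) :
    Module.End ℂ (SWTensor n K) :=
  ∑ j : Fin K, PiTensorProduct.map
    (Function.update (fun _ : Fin K => (LinearMap.id : (Fin n → ℂ) →ₗ[ℂ] (Fin n → ℂ)))
      j A.mulVecLin)

/-!
Inside `End(V^{⊗ι})`, let `D` be the algebra generated by the operators `D_A` and `P` the image of
the group algebra. Averaging over the permutations shows that the centralizer of `P` is spanned by
the symmetrizations `∑ σ, ⨂ j, A (σ j)`. These lie in `D`, by induction on the number of factors
`A j ≠ 1`: multiplying the symmetrization of `A` by `D_B` gives the sum over `a` of the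
symmetrizations of `A` with `A a` replaced by `B * A a`. The terms with `A a ≠ 1` have no more
nontrivial factors than `A`, and the others all coincide, so that one of them is obtained after
division by their number. Hence `D` is the centralizer of `P`, and since `P` is semisimple, the
double centralizer theorem makes `P` the centralizer of `D`.
-/

open Equiv (Perm)

section DoubleCentralizer

theorem centralizer_adjoin {F R : Type*} [CommSemiring F] [Semiring R] [Algebra F R] (s : Set R) :
    (Algebra.adjoin F s : Set R).centralizer = s.centralizer :=
  (Set.centralizer_subset Algebra.subset_adjoin).antisymm fun x hx _ hy =>
    (Algebra.adjoin_le_centralizer_centralizer F s hy x hx).symm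

theorem centralizer_range_monoidAlgebra_algHom {F G R : Type*} [CommSemiring F] [Monoid G]
    [Semiring R] [Algebra F R] (φ : MonoidAlgebra F G →ₐ[F] R) :
    (Set.range φ).centralizer = (Set.range fun g => φ (MonoidAlgebra.single g 1)).centralizer := by
  have adjoin_of : Algebra.adjoin F (Set.range (MonoidAlgebra.of F G)) = ⊤ :=
    Algebra.eq_top_iff.2 fun a =>
      Algebra.adjoin_mono (Set.image_subset_range _ _) (MonoidAlgebra.mem_adjoin_support a)
  have range_eq : φ.range = Algebra.adjoin F (Set.range (φ ∘ MonoidAlgebra.of F G)) := by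
    rw [← Algebra.map_top, ← adjoin_of, AlgHom.map_adjoin, Set.range_comp]
  rw [← AlgHom.coe_range, range_eq, centralizer_adjoin]
  rfl

theorem centralizer_centralizer_range_lsmul (F A W : Type*) [CommRing F] [Ring A] [Algebra F A]
    [AddCommGroup W] [Module F W] [Module A W] [IsScalarTower F A W] [IsSemisimpleModule A W]
    [Module.Finite F W] :
    (Set.range (Algebra.lsmul F F W : A →ₐ[F] Module.End F W)).centralizer.centralizer
      = Set.range (Algebra.lsmul F F W : A →ₐ[F] Module.End F W) := by
  refine Set.Subset.antisymm (fun f hf => ?_) Set.subset_centralizer_centralizer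
  have commute_end (g : Module.End A W) (w : W) : f (g w) = g (f w) := by
    refine (LinearMap.congr_fun (hf (g.restrictScalars F) ?_) w).symm
    rintro _ ⟨a, rfl⟩
    exact LinearMap.ext fun w => (g.map_smul a w).symm
  let fEnd : Module.End (Module.End A W) W :=
    { toFun := f, map_add' := f.map_add, map_smul' := commute_end }
  obtain ⟨s, hs⟩ := Module.Finite.fg_top (R := F) (M := W)
  obtain ⟨a, ha⟩ := jacobson_density fEnd s
  exact ⟨a, LinearMap.ext_on hs fun w hw => (ha w hw).symm⟩

theorem centralizer_centralizer_range {F A W : Type*} [CommRing F] [Ring A] [Algebra F A]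
    [IsSemisimpleRing A] [AddCommGroup W] [Module F W] [Module.Finite F W]
    (φ : A →ₐ[F] Module.End F W) :
    (Set.range φ).centralizer.centralizer = Set.range φ := by
  let : Module A W := Module.compHom W φ.toRingHom
  have : IsScalarTower F A W := ⟨fun c a w => LinearMap.congr_fun (map_smul φ c a) w⟩
  exact centralizer_centralizer_range_lsmul F A W

end DoubleCentralizer

section Symmetrization

theorem sum_mulSingle_comp_perm {ι M N : Type*} [Fintype ι] [DecidableEq ι] [One M]
    [AddCommMonoid N] (σ : Perm ι) (f : (ι → M) → N) (B : M) :
    ∑ j, f (Pi.mulSingle j B ∘ σ) = ∑ j, f (Pi.mulSingle j B) :=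
  Fintype.sum_equiv σ.symm _ _ fun j => by rw [Pi.mulSingle_comp_equiv]

variable {ι M R : Type*} [Fintype ι] [DecidableEq ι] [Monoid M] [Semiring R] (T : (ι → M) →* R)

/-- The sum of the values of `T` over all rearrangements of the family `A`. When `T` sends a family
of endomorphisms to its tensor product, this is `∑ σ, A (σ 1) ⊗ ⋯ ⊗ A (σ k)`. -/
def symmetrization (A : ι → M) : R :=
  ∑ σ : Perm ι, T (A ∘ σ)

theorem symmetrization_one : symmetrization T 1 = (Fintype.card ι).factorial := by
  simp [symmetrization, Pi.one_comp, Fintype.card_perm]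

theorem symmetrization_comp_perm (A : ι → M) (τ : Perm ι) :
    symmetrization T (A ∘ τ) = symmetrization T A :=
  Fintype.sum_equiv (Equiv.mulLeft τ) _ _ fun _ => rfl

theorem sum_mulSingle_mul_symmetrization (A : ι → M) (B : M) :
    (∑ j, T (Pi.mulSingle j B)) * symmetrization T A
      = ∑ a, symmetrization T (Pi.mulSingle a B * A) := by
  simp only [symmetrization, Finset.mul_sum]
  rw [Finset.sum_comm]
  refine Finset.sum_congr rfl fun σ _ => ?_
  simp only [Pi.mul_comp, map_mul]
  rw [← sum_mulSingle_comp_perm σ T B, Finset.sum_mul]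

theorem symmetrization_mulSingle_mul_eq {A : ι → M} {a b : ι} (ha : A a = 1) (hb : A b = 1)
    (B : M) :
    symmetrization T (Pi.mulSingle a B * A) = symmetrization T (Pi.mulSingle b B * A) := by
  have hA : A ∘ Equiv.swap a b = A := by
    ext j
    rw [Function.comp_apply, Equiv.swap_apply_def]
    split_ifs <;> simp_all
  rw [← symmetrization_comp_perm T _ (Equiv.swap a b), Pi.mul_comp, hA, Pi.mulSingle_comp_equiv,
    Equiv.symm_swap, Equiv.swap_apply_left]

theorem sum_mulSingle_mul_symmetrization_of_notMem {A : ι → M} {s : Finset ι}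
    (hA : ∀ j ∉ s, A j = 1) {a : ι} (ha : a ∉ s) (B : M) :
    (∑ j, T (Pi.mulSingle j B)) * symmetrization T A
      = ∑ c ∈ s, symmetrization T (Pi.mulSingle c B * A)
        + sᶜ.card • symmetrization T (Pi.mulSingle a B * A) := by
  rw [sum_mulSingle_mul_symmetrization, ← Finset.sum_add_sum_compl s]
  exact congrArg _ (Finset.sum_eq_card_nsmul fun c hc =>
    symmetrization_mulSingle_mul_eq T (hA c (Finset.mem_compl.1 hc)) (hA a ha) B)

theorem sum_conj_eq_symmetrization {ρ : Perm ι →* R}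
    (hρ : ∀ σ A, ρ σ * T A = T (A ∘ σ.symm) * ρ σ) (A : ι → M) :
    ∑ σ, ρ σ * T A * ρ σ⁻¹ = symmetrization T A :=
  Fintype.sum_equiv (Equiv.inv (Perm ι)) _ _ fun σ => by
    rw [hρ, mul_assoc, ← map_mul, mul_inv_cancel, map_one, mul_one]
    rfl

end Symmetrization

section PermutationCentralizer

variable {F ι M R : Type*} [Fintype ι] [DecidableEq ι] [Monoid M] [CommRing F] [Ring R]
  [Algebra F R] (T : (ι → M) →* R)

theorem symmetrization_mem_adjoin (hF : IsUnit ((Fintype.card ι).factorial : F)) (A : ι → M) :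
    symmetrization T A ∈ Algebra.adjoin F (Set.range fun B => ∑ j, T (Pi.mulSingle j B)) := by
  set S := Algebra.adjoin F (Set.range fun B => ∑ j, T (Pi.mulSingle j B))
  suffices ∀ (s : Finset ι) (A : ι → M), (∀ j ∉ s, A j = 1) → symmetrization T A ∈ S from
    this Finset.univ A fun j hj => absurd (Finset.mem_univ j) hj
  intro s
  induction s using Finset.induction_on with
  | empty =>
    intro A hA
    obtain rfl : A = 1 := funext fun j => hA j (Finset.notMem_empty j)
    rw [symmetrization_one]
    exact natCast_mem S _
  | insert a s has ih =>
    intro A hA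
    set A' := Function.update A a 1
    have hA' : ∀ j ∉ s, A' j = 1 := fun j hj => by
      by_cases hja : j = a <;> simp_all [A']
    have hA_eq : A = Pi.mulSingle a (A a) * A' := by
      ext j
      by_cases hja : j = a <;> simp_all [A']
    have support_terms : ∑ c ∈ s, symmetrization T (Pi.mulSingle c (A a) * A') ∈ S :=
      sum_mem fun c hc => ih _ fun j hj => by
        rw [Pi.mul_apply, hA' j hj, mul_one, Pi.mulSingle_eq_of_ne (by grind)]
    have nsmul_mem : sᶜ.card • symmetrization T A ∈ S := by
      rw [hA_eq, ← add_mem_cancel_left support_terms,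
        ← sum_mulSingle_mul_symmetrization_of_notMem T hA' has]
      exact mul_mem (Algebra.subset_adjoin ⟨A a, rfl⟩) (ih A' hA')
    have card_isUnit : IsUnit (sᶜ.card : F) := by
      refine isUnit_of_dvd_unit (Nat.cast_dvd_cast (Nat.dvd_factorial ?_ sᶜ.card_le_univ)) hF
      exact Finset.card_pos.2 ⟨a, Finset.mem_compl.2 has⟩
    rw [← Nat.cast_smul_eq_nsmul F] at nsmul_mem
    exact ((Subalgebra.toSubmodule S).smul_mem_iff_of_isUnit card_isUnit).1 nsmul_mem

theorem sum_conj_mem_adjoin (hF : IsUnit ((Fintype.card ι).factorial : F))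
    (hT : Submodule.span F (Set.range T) = ⊤) {ρ : Perm ι →* R}
    (hρ : ∀ σ A, ρ σ * T A = T (A ∘ σ.symm) * ρ σ) (x : R) :
    ∑ σ, ρ σ * x * ρ σ⁻¹ ∈ Algebra.adjoin F (Set.range fun B => ∑ j, T (Pi.mulSingle j B)) := by
  have hx : x ∈ Submodule.span F (Set.range T) := hT ▸ Submodule.mem_top
  induction hx using Submodule.span_induction with
  | mem x hx =>
    obtain ⟨A, rfl⟩ := hx
    rw [sum_conj_eq_symmetrization T hρ]
    exact symmetrization_mem_adjoin T hF A
  | zero => simp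
  | add x y _ _ hx hy =>
    simp only [mul_add, add_mul, Finset.sum_add_distrib]
    exact add_mem hx hy
  | smul c x _ hx =>
    simp only [mul_smul_comm, smul_mul_assoc, ← Finset.smul_sum]
    exact Subalgebra.smul_mem _ hx c

theorem centralizer_range_perm_eq_adjoin (hF : IsUnit ((Fintype.card ι).factorial : F))
    (hT : Submodule.span F (Set.range T) = ⊤) {ρ : Perm ι →* R}
    (hρ : ∀ σ A, ρ σ * T A = T (A ∘ σ.symm) * ρ σ) :
    (Set.range ρ).centralizer
      = (Algebra.adjoin F (Set.range fun B => ∑ j, T (Pi.mulSingle j B)) : Set R) := by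
  refine Set.Subset.antisymm (fun x hx => ?_) ?_
  · have average : ∑ σ, ρ σ * x * ρ σ⁻¹ = ((Fintype.card ι).factorial : F) • x := by
      rw [Nat.cast_smul_eq_nsmul, ← Fintype.card_perm, ← Finset.card_univ]
      refine Finset.sum_eq_card_nsmul fun σ _ => ?_
      rw [hx _ ⟨σ, rfl⟩, mul_assoc, ← map_mul, mul_inv_cancel, map_one, mul_one]
    refine ((Subalgebra.toSubmodule (Algebra.adjoin F _)).smul_mem_iff_of_isUnit hF).1 ?_
    exact average ▸ sum_conj_mem_adjoin T hF hT hρ x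
  · rw [← Subalgebra.coe_centralizer F, SetLike.coe_subset_coe, Algebra.adjoin_le_iff]
    rintro _ ⟨B, rfl⟩ _ ⟨σ, rfl⟩
    simp only [Finset.mul_sum, hρ]
    rw [← Finset.sum_mul, sum_mulSingle_comp_perm σ.symm T B]

end PermutationCentralizer

section TensorPower

theorem span_range_piTensorProduct_map {F ι : Type*} [CommSemiring F] [Finite ι] {V W : ι → Type*}
    [∀ i, AddCommMonoid (V i)] [∀ i, Module F (V i)] [∀ i, Module.Free F (V i)]
    [∀ i, Module.Finite F (V i)] [∀ i, AddCommMonoid (W i)] [∀ i, Module F (W i)]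
    [∀ i, Module.Free F (W i)] [∀ i, Module.Finite F (W i)] :
    Submodule.span F (Set.range fun A : (i : ι) → V i →ₗ[F] W i => PiTensorProduct.map A) = ⊤ := by
  classical
  cases nonempty_fintype ι
  let b := fun i => Module.Free.chooseBasis F (V i)
  let c := fun i => Module.Free.chooseBasis F (W i)
  let B := Basis.piTensorProduct b
  let C := Basis.piTensorProduct c
  rw [eq_top_iff, ← (B.linearMap C).span_eq, Submodule.span_le]
  rintro _ ⟨⟨p, q⟩, rfl⟩
  refine Submodule.subset_span ⟨fun i => (b i).linearMap (c i) (p i, q i), B.ext fun r => ?_⟩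
  rw [Module.Basis.linearMap_apply_apply]
  simp only [B, C, Basis.piTensorProduct_apply, PiTensorProduct.map_tprod,
    Module.Basis.linearMap_apply_apply]
  split_ifs with hqr
  · simp [hqr]
  · obtain ⟨i, hi⟩ := Function.ne_iff.1 hqr
    exact (PiTensorProduct.tprod F).map_coord_zero i (if_neg hi)

/-- The action `∑ j, id ⊗ ⋯ ⊗ A ⊗ ⋯ ⊗ id` of `A ∈ 𝔤𝔩(V)` on the tensor power of `V` whose factors
are indexed by `ι`. -/
noncomputable def tensorDerivation {F V ι : Type*} [CommSemiring F] [AddCommMonoid V] [Module F V]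
    [Fintype ι] [DecidableEq ι] (A : Module.End F V) : Module.End F (⨂[F] _ : ι, V) :=
  ∑ j, PiTensorProduct.map (Pi.mulSingle j A)

theorem mul_piTensorProduct_map {F V ι : Type*} [CommSemiring F] [AddCommMonoid V] [Module F V]
    {g : Module.End F (⨂[F] _ : ι, V)} {σ : Perm ι}
    (hg : ∀ v : ι → V, g (PiTensorProduct.tprod F v) = PiTensorProduct.tprod F (v ∘ σ.symm))
    (A : ι → Module.End F V) :
    g * PiTensorProduct.map A = PiTensorProduct.map (A ∘ σ.symm) * g :=
  PiTensorProduct.ext (MultilinearMap.ext fun v => by simp [hg, Function.comp_def])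

theorem schur_weyl_surjective_general {F V ι : Type*} [Field F] [AddCommGroup V] [Module F V]
    [Module.Finite F V] [Fintype ι] [DecidableEq ι]
    (hF : ((Fintype.card ι).factorial : F) ≠ 0)
    (φ : MonoidAlgebra F (Perm ι) →ₐ[F] Module.End F (⨂[F] _ : ι, V))
    (hφ : ∀ (σ : Perm ι) (v : ι → V),
      φ (MonoidAlgebra.single σ 1) (PiTensorProduct.tprod F v)
        = PiTensorProduct.tprod F (fun j => v (σ⁻¹ j))) :
    Set.range φ = (Set.range (tensorDerivation (F := F) (V := V) (ι := ι))).centralizer := by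
  have : NeZero (Nat.card (Perm ι) : F) := ⟨by rwa [Nat.card_perm, Nat.card_eq_fintype_card]⟩
  have centralizer_range : (Set.range φ).centralizer
      = (Algebra.adjoin F (Set.range (tensorDerivation (F := F) (V := V) (ι := ι))) : Set _) := by
    rw [centralizer_range_monoidAlgebra_algHom]
    exact centralizer_range_perm_eq_adjoin PiTensorProduct.mapMonoidHom hF.isUnit
      span_range_piTensorProduct_map
      (ρ := (φ : MonoidAlgebra F (Perm ι) →* _).comp (MonoidAlgebra.of F (Perm ι)))
      fun σ A => mul_piTensorProduct_map (hφ σ) A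
  rw [← centralizer_centralizer_range φ, centralizer_range, centralizer_adjoin]

theorem range_SWD (n K : ℕ) :
    Set.range (SWD n K) = Set.range (tensorDerivation (F := ℂ) (V := Fin n → ℂ) (ι := Fin K)) :=
  (Matrix.toLin' (R := ℂ) (m := Fin n) (n := Fin n)).surjective.range_comp tensorDerivation

end TensorPower

/-- Schur–Weyl duality: the image of `φ_k : ℂ[Σ_k] → End_ℂ(V^{⊗k})` is exactly the
centralizer algebra `End_{gl_n}(V^{⊗k})`; that is, `φ_k` defines a surjective algebra
homomorphism onto the centralizer. -/
theorem schur_weyl_surjective (n K : ℕ) (hn : 0 < n) (hK : 0 < K)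
    (φ : MonoidAlgebra ℂ (Equiv.Perm (Fin K)) →ₐ[ℂ] Module.End ℂ (SWTensor n K))
    (hφ : ∀ (σ : Equiv.Perm (Fin K)) (v : Fin K → (Fin n → ℂ)),
      φ (MonoidAlgebra.single σ 1) (PiTensorProduct.tprod ℂ v)
        = PiTensorProduct.tprod ℂ (fun j => v (σ⁻¹ j))) :
    Set.range ⇑φ = {f : Module.End ℂ (SWTensor n K) |
      ∀ A : Matrix (Fin n) (Fin n) ℂ, f * SWD n K A = SWD n K A * f} := by
  rw [schur_weyl_surjective_general (Nat.cast_ne_zero.2 (Nat.factorial_ne_zero _)) φ hφ,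
    ← range_SWD]
  exact Set.ext fun f => Set.forall_mem_range.trans (forall_congr' fun A => eq_comm)
end

section
/- If k ≤ n, then φ_k : C[Σ_k] → End_C(V^{⊗k}) is injective; combined with the surjectivity of φ_k onto the centralizer, φ_k is then a C-algebra isomorphism from C[Σ_k] onto End_{gl_n}(V^{⊗k}). -/
open scoped TensorProduct

/-!
Let `b` be a basis of `M` and let `e : ι ↪ κ` pick out distinct basis vectors. The tensor
`t = ⨂ᵢ b (e i)` controls the whole commutant of `gl(M)` on `M^{⊗ι}`.

* Its place permutations `⨂ᵢ b (e (σ⁻¹ i))` are distinct basis tensors, so `a ∈ R[Σ_ι]` can be read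
  off from `φ a t`.
* It is a cyclic vector for `gl(M)`: the rank-one operators `b (e i) ↦ x` change its factors one at
  a time. Hence an operator commuting with `gl(M)` is determined by its value on `t`.
* It has weight one for each projection onto a line `R • b (e i)`, so its image under a commuting
  operator involves only basis tensors in which every `b (e i)` occurs, that is, its place
  permutations. Using only whether `b (e i)` occurs, and not how often, makes this argument work
  over every commutative ring.
-/

open Module PiTensorProduct

section Combinatorics

variable {ι κ : Type*} [Finite ι]

theorem exists_perm_eq_comp_of_range_subset (e : ι ↪ κ) {g : ι → κ}
    (h : Set.range e ⊆ Set.range g) : ∃ σ : Equiv.Perm ι, g = e ∘ ⇑σ⁻¹ := by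
  choose τ hτ using fun i => h (Set.mem_range_self i)
  have τ_injective : Function.Injective τ := fun i j hij =>
    e.injective (by rw [← hτ i, ← hτ j, hij])
  let σ : Equiv.Perm ι := Equiv.ofBijective τ τ_injective.bijective_of_finite
  refine ⟨σ, funext fun i => ?_⟩
  rw [Function.comp_apply, ← hτ]
  exact congrArg g (σ.apply_symm_apply i).symm

end Combinatorics

section LeibnizAction

variable {R M ι : Type*} [CommSemiring R] [AddCommMonoid M] [Module R M]
  [Fintype ι] [DecidableEq ι]

variable (ι) in
/-- The Lie algebra action of `A ∈ gl(M)` on `M^{⊗ι}` by the Leibniz rule, the sum over `j : ι` of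
the operators applying `A` to the `j`-th tensor factor. -/
noncomputable def leibnizAction (A : End R M) : End R (⨂[R] _ : ι, M) :=
  ∑ j : ι, PiTensorProduct.map (Function.update (fun _ : ι => (LinearMap.id : M →ₗ[R] M)) j A)

theorem leibnizAction_tprod (A : End R M) (v : ι → M) :
    leibnizAction ι A (tprod R v) = ∑ j, tprod R (Function.update v j (A (v j))) := by
  simp only [leibnizAction, LinearMap.sum_apply, map_tprod]
  refine Finset.sum_congr rfl fun j _ => congrArg (PiTensorProduct.tprod R) (funext fun i => ?_)
  obtain rfl | hij := eq_or_ne i j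
  · simp
  · simp [hij]

theorem leibnizAction_smulRight_tprod (α : M →ₗ[R] R) (x : M) {v : ι → M} {i : ι}
    (hα : ∀ j ≠ i, α (v j) = 0) :
    leibnizAction ι (α.smulRight x) (tprod R v) = α (v i) • tprod R (Function.update v i x) := by
  rw [leibnizAction_tprod, Finset.sum_eq_single_of_mem i (Finset.mem_univ i),
    LinearMap.smulRight_apply, MultilinearMap.map_update_smul]
  intro j _ hj
  rw [LinearMap.smulRight_apply, hα j hj, zero_smul, MultilinearMap.map_update_zero]

theorem commute_leibnizAction_of_apply_tprod {T : End R (⨂[R] _ : ι, M)} (σ : Equiv.Perm ι)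
    (hT : ∀ v : ι → M, T (tprod R v) = ⨂ₜ[R] i, v (σ i)) (A : End R M) :
    Commute T (leibnizAction ι A) := by
  refine PiTensorProduct.ext (MultilinearMap.ext fun v => ?_)
  simp only [LinearMap.compMultilinearMap_apply, End.mul_apply, leibnizAction_tprod, map_sum, hT]
  symm
  refine Fintype.sum_equiv σ _ _ fun j => ?_
  refine congrArg (PiTensorProduct.tprod R) (funext fun i => ?_)
  obtain rfl | hij := eq_or_ne i j
  · simp
  · simp [hij]

variable {κ : Type*} (b : Basis κ R M)

theorem repr_leibnizAction_smulRight_eq_zero (α : M →ₗ[R] R) {k : κ} {g : ι → κ}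
    (hk : k ∉ Set.range g) (x : ⨂[R] _ : ι, M) :
    (Basis.piTensorProduct fun _ => b).repr (leibnizAction ι (α.smulRight (b k)) x) g = 0 := by
  let B := Basis.piTensorProduct fun _ : ι => b
  suffices h : B.coord g ∘ₗ leibnizAction ι (α.smulRight (b k)) = 0 from LinearMap.congr_fun h x
  refine PiTensorProduct.ext (MultilinearMap.ext fun v => ?_)
  simp only [LinearMap.compMultilinearMap_apply, LinearMap.comp_apply, leibnizAction_tprod,
    map_sum, LinearMap.smulRight_apply, MultilinearMap.map_update_smul, map_smul,
    LinearMap.zero_apply]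
  refine Finset.sum_eq_zero fun j _ => smul_eq_zero_of_right _ ?_
  have factor_eq_zero : b.repr (Function.update v j (b k) j) (g j) = 0 := by
    simpa using Finsupp.single_eq_of_ne fun h => hk ⟨j, h⟩
  rw [Basis.coord_apply, Basis.piTensorProduct_repr_tprod_apply]
  exact Finset.prod_eq_zero (Finset.mem_univ j) factor_eq_zero

theorem leibnizAction_coord_smulRight_tprod_basis (e : ι ↪ κ) (i : ι) :
    leibnizAction ι ((b.coord (e i)).smulRight (b (e i))) (⨂ₜ[R] j, b (e j)) =
      ⨂ₜ[R] j, b (e j) := by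
  rw [leibnizAction_smulRight_tprod (i := i)]
  · simp
  · intro j hj
    simp [hj]

theorem exists_perm_of_repr_apply_tprod_ne_zero (e : ι ↪ κ) {T : End R (⨂[R] _ : ι, M)}
    (hT : ∀ A, Commute T (leibnizAction ι A)) {g : ι → κ}
    (hg : (Basis.piTensorProduct fun _ => b).repr (T (⨂ₜ[R] i, b (e i))) g ≠ 0) :
    ∃ σ : Equiv.Perm ι, g = e ∘ ⇑σ⁻¹ := by
  refine exists_perm_eq_comp_of_range_subset e (Set.range_subset_iff.2 fun i => ?_)
  by_contra hi
  refine hg ?_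
  rw [← leibnizAction_coord_smulRight_tprod_basis b e i, ← End.mul_apply, (hT _).eq,
    End.mul_apply]
  exact repr_leibnizAction_smulRight_eq_zero b _ hi _

end LeibnizAction

section Cyclic

variable {R M ι κ : Type*} [CommRing R] [AddCommGroup M] [Module R M] [Fintype ι] [DecidableEq ι]
  (b : Basis κ R M) (e : ι ↪ κ)

theorem tprod_mem_of_leibnizAction_mem {W : Submodule R (⨂[R] _ : ι, M)}
    (hW : ∀ A, ∀ x ∈ W, leibnizAction ι A x ∈ W) (hmem : (⨂ₜ[R] i, b (e i)) ∈ W)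
    (S : Finset ι) {v : ι → M} (hv : ∀ i ∉ S, v i = b (e i)) : tprod R v ∈ W := by
  induction S using Finset.induction_on generalizing v with
  | empty => rwa [show v = fun i => b (e i) from funext fun i => hv i (Finset.notMem_empty i)]
  | insert j S _ ih =>
    let A : End R M := (b.coord (e j)).smulRight (v j)
    let u : ι → M := Function.update v j (b (e j))
    have hu : ∀ i ∉ S, u i = b (e i) := by
      intro i hi
      obtain rfl | hij := eq_or_ne i j
      · simp [u]
      · simpa [u, hij] using hv i (by simp [hij, hi])
    have update_eq : Function.update u j (A (u j)) = v := by simp [u, A]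
    have sum_mem : ∑ i, tprod R (Function.update u i (A (u i))) ∈ W :=
      leibnizAction_tprod A u ▸ hW A _ (ih hu)
    rw [← Finset.add_sum_erase _ _ (Finset.mem_univ j), update_eq] at sum_mem
    refine (W.add_mem_iff_left (W.sum_mem fun i hi => ?_)).1 sum_mem
    have hij : i ≠ j := Finset.ne_of_mem_erase hi
    by_cases hiS : i ∈ S
    · refine ih fun l hl => ?_
      rw [Function.update_of_ne (ne_of_mem_of_not_mem hiS hl).symm, hu l hl]
    · have hA : A (u i) = 0 := by simp [A, hu i hiS, hij]
      rw [hA, MultilinearMap.map_update_zero]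
      exact W.zero_mem

theorem eq_top_of_leibnizAction_mem {W : Submodule R (⨂[R] _ : ι, M)}
    (hW : ∀ A, ∀ x ∈ W, leibnizAction ι A x ∈ W) (hmem : (⨂ₜ[R] i, b (e i)) ∈ W) :
    W = ⊤ := by
  rw [eq_top_iff, ← span_tprod_eq_top, Submodule.span_le]
  rintro _ ⟨v, rfl⟩
  exact tprod_mem_of_leibnizAction_mem b e hW hmem Finset.univ (by simp)

variable {T T' : End R (⨂[R] _ : ι, M)} (hT : ∀ A, Commute T (leibnizAction ι A))
  (hT' : ∀ A, Commute T' (leibnizAction ι A))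
include hT hT'

theorem eq_of_commute_leibnizAction_of_apply_tprod_eq
    (h : T (⨂ₜ[R] i, b (e i)) = T' (⨂ₜ[R] i, b (e i))) : T = T' := by
  refine LinearMap.eqLocus_eq_top.1 (eq_top_of_leibnizAction_mem b e (fun A x hx => ?_) h)
  calc T (leibnizAction ι A x) = leibnizAction ι A (T x) := LinearMap.congr_fun (hT A).eq x
    _ = leibnizAction ι A (T' x) := congrArg _ hx
    _ = T' (leibnizAction ι A x) := (LinearMap.congr_fun (hT' A).eq x).symm

theorem eq_of_commute_leibnizAction_of_repr_eq
    (h : ∀ σ : Equiv.Perm ι,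
      (Basis.piTensorProduct fun _ => b).repr (T (⨂ₜ[R] i, b (e i))) (e ∘ ⇑σ⁻¹) =
        (Basis.piTensorProduct fun _ => b).repr (T' (⨂ₜ[R] i, b (e i))) (e ∘ ⇑σ⁻¹)) :
    T = T' := by
  refine eq_of_commute_leibnizAction_of_apply_tprod_eq b e hT hT'
    ((Basis.piTensorProduct fun _ => b).ext_elem fun g => ?_)
  by_cases hg : ∃ σ : Equiv.Perm ι, g = e ∘ ⇑σ⁻¹
  · obtain ⟨σ, rfl⟩ := hg
    exact h σ
  · rw [not_imp_comm.1 (exists_perm_of_repr_apply_tprod_ne_zero b e hT) hg,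
      not_imp_comm.1 (exists_perm_of_repr_apply_tprod_ne_zero b e hT') hg]

end Cyclic

section PlacePermutation

variable {R M ι : Type*} [CommSemiring R] [AddCommMonoid M] [Module R M]

/-- `φ` is the homomorphism from the group algebra of the symmetric group to `End(M^{⊗ι})` given by
permuting tensor factors: `σ` moves the factor in place `i` to place `σ i`. -/
def IsPlacePermutation (φ : MonoidAlgebra R (Equiv.Perm ι) →ₐ[R] End R (⨂[R] _ : ι, M)) : Prop :=
  ∀ (σ : Equiv.Perm ι) (v : ι → M),
    φ (MonoidAlgebra.single σ 1) (tprod R v) = ⨂ₜ[R] j, v (σ⁻¹ j)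

namespace IsPlacePermutation

variable {φ : MonoidAlgebra R (Equiv.Perm ι) →ₐ[R] End R (⨂[R] _ : ι, M)}

theorem commute_leibnizAction [Fintype ι] [DecidableEq ι] (hφ : IsPlacePermutation φ)
    (a : MonoidAlgebra R (Equiv.Perm ι)) (A : End R M) : Commute (φ a) (leibnizAction ι A) := by
  rw [MonoidAlgebra.lift_unique φ a]
  exact Commute.sum_left _ _ _ fun σ _ =>
    (commute_leibnizAction_of_apply_tprod σ⁻¹ (hφ σ) A).smul_left _

variable [Finite ι] {κ : Type*}

theorem repr_apply_tprod_basis (hφ : IsPlacePermutation φ) (b : Basis κ R M) (e : ι ↪ κ)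
    (a : MonoidAlgebra R (Equiv.Perm ι)) (σ : Equiv.Perm ι) :
    (Basis.piTensorProduct fun _ => b).repr (φ a (⨂ₜ[R] i, b (e i))) (e ∘ ⇑σ⁻¹) = a.coeff σ := by
  classical
  let B := Basis.piTensorProduct fun _ : ι => b
  have comp_inv_injective : Function.Injective fun τ : Equiv.Perm ι => e ∘ ⇑τ⁻¹ :=
    e.injective.comp_left.comp (DFunLike.coe_injective.comp inv_injective)
  induction a using MonoidAlgebra.induction_linear with
  | zero => simp
  | add a a' ha ha' =>
    rw [map_add, LinearMap.add_apply, map_add, Finsupp.add_apply, ha, ha',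
      MonoidAlgebra.coeff_add, Finsupp.add_apply]
  | single τ r =>
    have hB : φ (MonoidAlgebra.single τ r) (⨂ₜ[R] i, b (e i)) = r • B (e ∘ ⇑τ⁻¹) := by
      rw [← mul_one r, ← smul_eq_mul, ← MonoidAlgebra.smul_single, map_smul, LinearMap.smul_apply,
        hφ, Basis.piTensorProduct_apply]
      simp
    rw [hB, map_smul, Basis.repr_self, Finsupp.smul_apply, MonoidAlgebra.coeff_single,
      Finsupp.single_apply, Finsupp.single_apply, comp_inv_injective.eq_iff]
    simp

theorem injective (hφ : IsPlacePermutation φ) (b : Basis κ R M) (e : ι ↪ κ) :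
    Function.Injective φ := by
  intro a a' h
  ext σ
  rw [← hφ.repr_apply_tprod_basis b e a σ, h, hφ.repr_apply_tprod_basis b e a' σ]

end IsPlacePermutation

end PlacePermutation

theorem SWD_eq_leibnizAction (n K : ℕ) (A : Matrix (Fin n) (Fin n) ℂ) :
    SWD n K A = leibnizAction (Fin K) (Matrix.toLin' A) :=
  rfl

theorem schur_weyl_isomorphism_general {R M ι κ : Type*} [CommRing R] [AddCommGroup M] [Module R M]
    [Fintype ι] [DecidableEq ι] (b : Basis κ R M) (e : ι ↪ κ)
    (φ : MonoidAlgebra R (Equiv.Perm ι) →ₐ[R] End R (⨂[R] _ : ι, M))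
    (hφ : IsPlacePermutation φ) :
    Function.Injective φ ∧
      Set.range φ = {f : End R (⨂[R] _ : ι, M) |
        ∀ A : End R M, f * leibnizAction ι A = leibnizAction ι A * f} := by
  refine ⟨hφ.injective b e, Set.Subset.antisymm ?_ fun f hf => ?_⟩
  · rintro _ ⟨a, rfl⟩
    exact hφ.commute_leibnizAction a
  · let a : MonoidAlgebra R (Equiv.Perm ι) := .ofCoeff <| Finsupp.equivFunOnFinite.symm fun σ =>
      (Basis.piTensorProduct fun _ => b).repr (f (⨂ₜ[R] i, b (e i))) (e ∘ ⇑σ⁻¹)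
    exact ⟨a, eq_of_commute_leibnizAction_of_repr_eq b e (hφ.commute_leibnizAction a) hf
      (hφ.repr_apply_tprod_basis b e a)⟩

/-- If `k ≤ n` then `φ_k : ℂ[Σ_k] → End_ℂ(V^{⊗k})` is injective; combined with the
surjectivity onto the centralizer, `φ_k` is an isomorphism from `ℂ[Σ_k]` onto
`End_{gl_n}(V^{⊗k})`. -/
theorem schur_weyl_isomorphism (n K : ℕ) (hn : 0 < n) (hK : 0 < K) (hKn : K ≤ n)
    (φ : MonoidAlgebra ℂ (Equiv.Perm (Fin K)) →ₐ[ℂ] Module.End ℂ (SWTensor n K))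
    (hφ : ∀ (σ : Equiv.Perm (Fin K)) (v : Fin K → (Fin n → ℂ)),
      φ (MonoidAlgebra.single σ 1) (PiTensorProduct.tprod ℂ v)
        = PiTensorProduct.tprod ℂ (fun j => v (σ⁻¹ j))) :
    Function.Injective ⇑φ ∧
      Set.range ⇑φ = {f : Module.End ℂ (SWTensor n K) |
        ∀ A : Matrix (Fin n) (Fin n) ℂ, f * SWD n K A = SWD n K A * f} := by
  simpa only [SWD_eq_leibnizAction, Matrix.toLin'.surjective.forall] using
    schur_weyl_isomorphism_general (Pi.basisFun ℂ (Fin n)) (Fin.castLEEmb hKn) φ hφ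
end
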